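/- Let g: ℝ → ℝ be a smooth Morse function (every zero of g' is not a zero of g'') whose image g(ℝ) is bounded, and let μ be an interior point of the image g(ℝ). Then there exist real numbers R⁺ > μ and R⁻ < μ and sequences (x_m⁺) and (x_m⁻) of real numbers such that: g'(x_m⁺) ≠ 0 and g'(x_m⁻) ≠ 0 for every m; g'(x_m⁺) → 0 and g'(x_m⁻) → 0 as m → ∞; and g(x_m⁺) → R⁺ and g(x_m⁻) → R⁻ as m → ∞. -/

import Mathlib

open Filter Topology

theorem aux_point (g : ℝ → ℝ) (hg : ContDiff ℝ 2 g)
    (hmorse : ∀ x, deriv g x = 0 → deriv (deriv g) x ≠ 0) (S : ℝ)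
    (hS : IsLUB (Set.range g) S) (ε : ℝ) (hε : 0 < ε) :
    ∃ x, deriv g x ≠ 0 ∧ |deriv g x| < 3 * ε ∧ S - 2 * ε ^ 2 < g x := by
  have hub : ∀ x, g x ≤ S := fun x => hS.1 ⟨x, rfl⟩
  obtain ⟨_, ⟨x0, rfl⟩, hx0, -⟩ := hS.exists_between (show S - ε ^ 2 < S by nlinarith)
  have hd : Differentiable ℝ g := hg.differentiable (by norm_num)
  have hd' : ContDiff ℝ 1 (deriv g) := by
    have : ContDiff ℝ (1 + 1) g := by
      convert hg using 1
      norm_num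
    exact (contDiff_succ_iff_deriv.1 this).2.2
  have hc' : Continuous (deriv g) := hd'.continuous
  have hcont : Continuous (fun x => g x - (x - x0) ^ 2) := by
    have := hd.continuous
    fun_prop
  obtain ⟨y, hy, hmax⟩ := (isCompact_Icc (a := x0 - ε) (b := x0 + ε)).exists_isMaxOn
    ⟨x0, by constructor <;> linarith⟩ hcont.continuousOn
  have h0 : g x0 - (x0 - x0) ^ 2 ≤ g y - (y - x0) ^ 2 :=
    hmax (show x0 ∈ Set.Icc (x0 - ε) (x0 + ε) by constructor <;> linarith)
  have hlt : |y - x0| < ε := by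
    apply abs_lt_of_sq_lt_sq _ hε.le
    have := hub y
    nlinarith
  have hlt' := abs_lt.1 hlt
  have hloc : IsLocalMax (fun x => g x - (x - x0) ^ 2) y :=
    hmax.isLocalMax (Icc_mem_nhds (by linarith) (by linarith))
  have hder : HasDerivAt (fun x => g x - (x - x0) ^ 2) (deriv g y - 2 * (y - x0)) y := by
    have h1 := ((hasDerivAt_id y).sub_const x0).pow 2
    have h2 := (hd y).hasDerivAt.sub h1
    refine HasDerivAt.congr_deriv (f := fun x => g x - (x - x0) ^ 2) h2 ?_
    simp
  have hz := hloc.hasDerivAt_eq_zero hder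
  have hyd : |deriv g y| < 3 * ε := by
    rw [abs_lt]; constructor <;> linarith
  have hyg : S - 2 * ε ^ 2 < g y := by nlinarith
  by_cases hc : deriv g y = 0
  · have hdd : HasDerivAt (deriv g) (deriv (deriv g) y) y :=
      ((hd'.differentiable (by norm_num)) y).hasDerivAt
    have e1 : ∀ᶠ z in 𝓝[≠] y, deriv g z ≠ 0 := hdd.eventually_ne (hmorse y hc)
    have e2 : ∀ᶠ z in 𝓝 y, |deriv g z| < 3 * ε :=
      (hc'.abs.tendsto y).eventually (gt_mem_nhds hyd)
    have e3 : ∀ᶠ z in 𝓝 y, S - 2 * ε ^ 2 < g z :=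
      (hd.continuous.tendsto y).eventually (lt_mem_nhds hyg)
    obtain ⟨z, h1, h2, h3⟩ := (e1.and ((e2.and e3).filter_mono nhdsWithin_le_nhds)).exists
    exact ⟨z, h1, h2, h3⟩
  · exact ⟨y, hc, hyd, hyg⟩

theorem aux_seq (g : ℝ → ℝ) (hg : ContDiff ℝ 2 g)
    (hmorse : ∀ x, deriv g x = 0 → deriv (deriv g) x ≠ 0)
    (hb : BddAbove (Set.range g)) (μ : ℝ) (hμ : ∃ x, μ < g x) :
    ∃ (R : ℝ) (x : ℕ → ℝ), μ < R ∧ (∀ m, deriv g (x m) ≠ 0) ∧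
      Tendsto (fun m => deriv g (x m)) atTop (𝓝 0) ∧
      Tendsto (fun m => g (x m)) atTop (𝓝 R) := by
  have hS := isLUB_csSup (Set.range_nonempty g) hb
  set S := sSup (Set.range g)
  obtain ⟨x1, hx1⟩ := hμ
  have hpos : ∀ m : ℕ, (0 : ℝ) < 1 / ((m : ℝ) + 1) := fun m => by positivity
  choose x h1 h2 h3 using fun m : ℕ => aux_point g hg hmorse S hS _ (hpos m)
  have ht := tendsto_one_div_add_atTop_nhds_zero_nat (𝕜 := ℝ)
  refine ⟨S, x, hx1.trans_le (hS.1 ⟨x1, rfl⟩), h1, ?_, ?_⟩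
  · refine squeeze_zero_norm (fun m => (h2 m).le) ?_
    simpa using ht.const_mul 3
  · refine tendsto_of_tendsto_of_tendsto_of_le_of_le ?_ tendsto_const_nhds
      (fun m => (h3 m).le) (fun m => hS.1 ⟨x m, rfl⟩)
    simpa using ((ht.pow 2).const_mul 2).const_sub S

/-- If `g : ℝ → ℝ` is a smooth Morse function with bounded image and `μ` is an interior
point of the image, then there are almost-critical sequences `xp`, `xm` with
`g (xp m) → R⁺ > μ` and `g (xm m) → R⁻ < μ`, `deriv g` nonzero along them and tending to 0. -/
theorem stmt0 (g : ℝ → ℝ) (hg : ContDiff ℝ (⊤ : ℕ∞) g)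
    (hmorse : ∀ x, deriv g x = 0 → deriv (deriv g) x ≠ 0)
    (hbdd : Bornology.IsBounded (Set.range g))
    (μ : ℝ) (hμ : μ ∈ interior (Set.range g)) :
    ∃ (Rp Rm : ℝ) (xp xm : ℕ → ℝ),
      μ < Rp ∧ Rm < μ ∧
      (∀ m, deriv g (xp m) ≠ 0) ∧ (∀ m, deriv g (xm m) ≠ 0) ∧
      Tendsto (fun m => deriv g (xp m)) atTop (𝓝 0) ∧
      Tendsto (fun m => deriv g (xm m)) atTop (𝓝 0) ∧
      Tendsto (fun m => g (xp m)) atTop (𝓝 Rp) ∧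
      Tendsto (fun m => g (xm m)) atTop (𝓝 Rm) := by
  have hg2 : ContDiff ℝ 2 g := contDiff_infty.1 hg 2
  obtain ⟨ε, hε, hball⟩ := Metric.mem_nhds_iff.1 (mem_interior_iff_mem_nhds.1 hμ)
  obtain ⟨a, ha⟩ : μ + ε / 2 ∈ Set.range g := hball (by
    rw [Metric.mem_ball, Real.dist_eq, abs_lt]; constructor <;> linarith)
  obtain ⟨b, hb⟩ : μ - ε / 2 ∈ Set.range g := hball (by
    rw [Metric.mem_ball, Real.dist_eq, abs_lt]; constructor <;> linarith)
  have hdn : deriv (fun x => - g x) = fun x => - deriv g x := by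
    funext x; exact deriv.fun_neg
  have hddn : deriv (fun x => - deriv g x) = fun x => - deriv (deriv g) x := by
    funext x; exact deriv.fun_neg
  obtain ⟨Rp, xp, p1, p2, p3, p4⟩ := aux_seq g hg2 hmorse hbdd.bddAbove μ ⟨a, by linarith⟩
  obtain ⟨c, hc⟩ := hbdd.bddBelow
  obtain ⟨Rm, xm, m1, m2, m3, m4⟩ := aux_seq (fun x => - g x) hg2.neg
    (by
      intro x hx
      rw [hdn] at hx ⊢
      rw [hddn]
      exact neg_ne_zero.2 (hmorse x (neg_eq_zero.1 hx)))
    ⟨-c, by rintro _ ⟨x, rfl⟩; exact neg_le_neg (hc ⟨x, rfl⟩)⟩ (-μ) ⟨b, by linarith⟩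
  rw [hdn] at m2 m3
  refine ⟨Rp, -Rm, xp, xm, p1, by linarith, p2, fun m => neg_ne_zero.1 (m2 m), p3, ?_, p4, ?_⟩
  · simpa using m3.neg
  · simpa using m4.neg
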